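/- arXiv:2309.15841 — 7 statements merged into one kernel-verified Lean document; each statement's English description precedes it below -/
import Mathlib

section
/- Let X be a finite simple bipartite graph with a proper 2-coloring c : V(X) → {true, false}. Let P be the diagonal matrix indexed by the darts of X whose (d,d) entry is +1 if c(tail(d)) = true and −1 otherwise. Then P · (D(X) + M(X)) · P = D(X) − M(X); in particular, the matrices D(X) + M(X) and D(X) − M(X) (over ℝ) are similar. -/
open Matrix

variable {V : Type*} [Fintype V] [DecidableEq V]

/-- The edge adjacency matrix of a graph, indexed by darts:
`M d e = 1` if the head of `d` is the tail of `e` and the tail of `d` is not the head of `e`. -/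
def edgeAdj (R : Type*) [Ring R] (G : SimpleGraph V) [DecidableRel G.Adj] :
    Matrix G.Dart G.Dart R :=
  fun d e => if d.toProd.2 = e.toProd.1 ∧ d.toProd.1 ≠ e.toProd.2 then 1 else 0

/-- The diagonal matrix with `(d,d)` entry `deg(head d) - 1`. -/
def degDiag (R : Type*) [Ring R] (G : SimpleGraph V) [DecidableRel G.Adj] :
    Matrix G.Dart G.Dart R :=
  Matrix.diagonal fun d => (G.degree d.toProd.2 : R) - 1

section SignConjugation

variable {R : Type*} [Ring R] (G : SimpleGraph V) [DecidableRel G.Adj]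

theorem diagonal_mul_degDiag_mul_diagonal {s : G.Dart → R} (hs : ∀ d, s d * s d = 1) :
    diagonal s * degDiag R G * diagonal s = degDiag R G := by
  have degree_commute (d : G.Dart) : Commute (s d) ((G.degree d.toProd.2 : R) - 1) :=
    (Nat.commute_cast _ _).sub_right (Commute.one_right _)
  simp only [degDiag, diagonal_mul_diagonal]
  congr 1
  funext d
  rw [(degree_commute d).eq, mul_assoc, hs, mul_one]

-- On the support of `edgeAdj` the tail of `e` is the head of `d`, so the two tails are adjacent.
theorem diagonal_mul_edgeAdj_mul_diagonal {s : V → R}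
    (hs : ∀ u v, G.Adj u v → s u * s v = -1) :
    (diagonal fun d : G.Dart => s d.toProd.1) * edgeAdj R G *
        (diagonal fun d : G.Dart => s d.toProd.1) = -edgeAdj R G := by
  ext d e
  rw [mul_diagonal, diagonal_mul, neg_apply, edgeAdj]
  split_ifs with hde
  · rw [mul_one, ← hde.1, hs _ _ d.adj]
  · rw [mul_zero, zero_mul, neg_zero]

end SignConjugation

theorem stmt0_general (R : Type*) [Ring R] (G : SimpleGraph V) [DecidableRel G.Adj]
    (c : V → Bool) (hc : ∀ u v : V, G.Adj u v → c u ≠ c v) :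
    (diagonal fun d : G.Dart => if c d.toProd.1 then (1 : R) else -1) *
        (degDiag R G + edgeAdj R G) *
        (diagonal fun d : G.Dart => if c d.toProd.1 then (1 : R) else -1) =
      degDiag R G - edgeAdj R G := by
  let sign (v : V) : R := if c v then 1 else -1
  have sign_mul_self (v : V) : sign v * sign v = 1 := by
    cases hv : c v <;> simp [sign, hv]
  have sign_mul_of_adj (u v : V) (huv : G.Adj u v) : sign u * sign v = -1 := by
    have hv : c v = !c u := Bool.eq_not.mpr (hc u v huv).symm
    cases hu : c u <;> simp [sign, hu, hv]
  rw [mul_add, add_mul, diagonal_mul_degDiag_mul_diagonal G fun d => sign_mul_self d.toProd.1,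
    diagonal_mul_edgeAdj_mul_diagonal G sign_mul_of_adj, sub_eq_add_neg]

/-- If `c` is a proper 2-coloring of `X` and `P` is the `±1` diagonal matrix determined by the
color of the tail of each dart, then `P ⬝ (D + M) ⬝ P = D - M`; in particular `D + M` and
`D - M` are similar. -/
theorem stmt0 (G : SimpleGraph V) [DecidableRel G.Adj]
    (c : V → Bool) (hc : ∀ u v : V, G.Adj u v → c u ≠ c v) :
    (Matrix.diagonal fun d : G.Dart => if c d.toProd.1 then (1 : ℝ) else -1) *
        (degDiag ℝ G + edgeAdj ℝ G) *
        (Matrix.diagonal fun d : G.Dart => if c d.toProd.1 then (1 : ℝ) else -1) =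
      degDiag ℝ G - edgeAdj ℝ G :=
  stmt0_general ℝ G c hc
end

section
/- Let X be a finite simple graph whose edge adjacency matrix M = M(X) is irreducible, i.e., for all darts d, e there exists k ≥ 1 with (M^k)_{d,e} ≠ 0. Then X is bipartite if and only if there exists an invertible real matrix S, indexed by the darts of X, such that S⁻¹ · (D(X) + M(X)) · S = D(X) − M(X). -/
open Matrix

variable {V : Type*} [Fintype V] [DecidableEq V]

/-!
Conjugating by the diagonal matrix of the signs of a proper 2-colouring, evaluated at the tails of
the darts, fixes `D` and negates `M`. Conversely, similar matrices have the same traces of powers.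
As `D` and `M` are entrywise nonnegative, expanding `tr (D + M) ^ n - tr (D - M) ^ n` for odd `n`
into words in `D` and `M` leaves twice those with an odd number of letters `M`, so it is at least
`2 * tr (M ^ n)`. An odd cycle of length `n` is a closed walk of darts without backtracking, hence
makes this trace positive; so all cycles are even and the graph is bipartite.
-/

section NonnegMatrix

variable {n R : Type*} [Fintype n] [DecidableEq n] [Ring R] [LinearOrder R]

theorem abs_pow_apply_le_pow_apply [IsOrderedRing R] {A C : Matrix n n R}
    (h : ∀ i j, |C i j| ≤ A i j) (k : ℕ) (i j : n) : |(C ^ k) i j| ≤ (A ^ k) i j := by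
  induction k generalizing j with
  | zero =>
    simp only [pow_zero, one_apply]
    split_ifs <;> simp
  | succ k ih =>
    simp only [pow_succ, mul_apply]
    calc |∑ x, (C ^ k) i x * C x j|
        ≤ ∑ x, |(C ^ k) i x * C x j| := Finset.abs_sum_le_sum_abs _ _
      _ = ∑ x, |(C ^ k) i x| * |C x j| := by simp only [abs_mul]
      _ ≤ ∑ x, (A ^ k) i x * A x j := Finset.sum_le_sum fun x _ =>
        mul_le_mul (ih x) (h x j) (abs_nonneg _) ((abs_nonneg _).trans (ih x))

-- The right-hand side is twice the sum of the words of length `k` in `A` and `B` in which `A`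
-- occurs an even number of times; `B ^ k` is one of them.
theorem two_nsmul_pow_apply_le_add_pow_add_sub_pow [IsOrderedRing R] {A B : Matrix n n R}
    (hA : ∀ i j, 0 ≤ A i j) (hB : ∀ i j, 0 ≤ B i j) (k : ℕ) (i j : n) :
    2 • (B ^ k) i j ≤ ((A + B) ^ k) i j + ((B - A) ^ k) i j := by
  induction k generalizing i with
  | zero => simp only [pow_zero, two_nsmul, le_refl]
  | succ k ih =>
    have hBA (x y : n) : |(B - A) x y| ≤ (A + B) x y := by
      simpa only [Matrix.sub_apply, Matrix.add_apply, abs_of_nonneg (hA x y),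
        abs_of_nonneg (hB x y), add_comm] using abs_sub (B x y) (A x y)
    have hodd (x : n) : 0 ≤ ((A + B) ^ k) x j - ((B - A) ^ k) x j :=
      sub_nonneg.2 ((le_abs_self _).trans (abs_pow_apply_le_pow_apply hBA k x j))
    have hrec : (A + B) ^ (k + 1) + (B - A) ^ (k + 1) =
        B * ((A + B) ^ k + (B - A) ^ k) + A * ((A + B) ^ k - (B - A) ^ k) := by
      simp only [pow_succ']
      noncomm_ring
    calc 2 • (B ^ (k + 1)) i j = ∑ x, B i x * 2 • (B ^ k) x j := by
          simp only [pow_succ', mul_apply, Finset.smul_sum, mul_smul_comm]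
      _ ≤ ∑ x, B i x * (((A + B) ^ k) x j + ((B - A) ^ k) x j) :=
        Finset.sum_le_sum fun x _ => mul_le_mul_of_nonneg_left (ih x) (hB i x)
      _ ≤ ∑ x, B i x * (((A + B) ^ k) x j + ((B - A) ^ k) x j) +
          ∑ x, A i x * (((A + B) ^ k) x j - ((B - A) ^ k) x j) :=
        le_add_of_nonneg_right (Finset.sum_nonneg fun x _ => mul_nonneg (hA i x) (hodd x))
      _ = ((A + B) ^ (k + 1)) i j + ((B - A) ^ (k + 1)) i j :=
        (congrFun (congrFun hrec i) j).symm

theorem trace_sub_pow_lt_trace_add_pow [IsStrictOrderedRing R] {A B : Matrix n n R}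
    (hA : ∀ i j, 0 ≤ A i j) (hB : ∀ i j, 0 ≤ B i j) {k : ℕ} (hk : Odd k) {i : n}
    (hi : 0 < (B ^ k) i i) : trace ((A - B) ^ k) < trace ((A + B) ^ k) := by
  have hneg : (B - A) ^ k = -(A - B) ^ k := by rw [← neg_sub A B, hk.neg_pow]
  have htrace : 0 < trace (B ^ k) :=
    Finset.sum_pos' (fun j _ => pow_apply_nonneg hB k j j) ⟨i, Finset.mem_univ i, hi⟩
  have hle : 2 • trace (B ^ k) ≤ trace ((A + B) ^ k) + trace ((B - A) ^ k) := by
    simp only [trace, diag_apply, Finset.smul_sum, ← Finset.sum_add_distrib]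
    exact Finset.sum_le_sum fun j _ =>
      two_nsmul_pow_apply_le_add_pow_add_sub_pow hA hB k j j
  rw [hneg, trace_neg, ← sub_eq_add_neg] at hle
  exact sub_pos.1 ((nsmul_pos htrace two_ne_zero).trans_le hle)

end NonnegMatrix

theorem pow_apply_pos_of_isChain {n R : Type*} [Fintype n] [DecidableEq n] [Ring R] [PartialOrder R]
    [IsStrictOrderedRing R] {A : Matrix n n R} (hA : ∀ i j, 0 ≤ A i j) {i j : n} {l : List n}
    (hl : List.IsChain (fun x y => 0 < A x y) (i :: (l ++ [j]))) :
    0 < (A ^ (l.length + 1)) i j := by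
  induction l generalizing i with
  | nil => simpa using hl
  | cons x l ih =>
    obtain ⟨hix, hxl⟩ := List.isChain_cons_cons.1 hl
    rw [pow_succ', mul_apply]
    exact Finset.sum_pos' (fun y _ => mul_nonneg (hA i y) (pow_apply_nonneg hA _ y j))
      ⟨x, Finset.mem_univ x, mul_pos hix (ih hxl)⟩

theorem trace_pow_eq_of_inv_mul_mul_eq {n R : Type*} [Fintype n] [DecidableEq n] [CommRing R]
    {A B S : Matrix n n R} (hS : IsUnit S) (h : S⁻¹ * A * S = B) (k : ℕ) :
    trace (A ^ k) = trace (B ^ k) := by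
  obtain ⟨U, rfl⟩ := hS
  rw [← h, ← coe_units_inv, U.conj_pow', trace_units_conj']

theorem isChain_ne_cons_append_singleton {α : Type*} {a : α} {l : List α}
    (hl : l ≠ []) (hnodup : (a :: l).Nodup) : List.IsChain (· ≠ ·) (a :: (l ++ [a])) := by
  obtain ⟨b, l, rfl⟩ := List.exists_cons_of_ne_nil hl
  refine List.isChain_cons_cons.2 ⟨by grind, List.Pairwise.isChain ?_⟩
  exact (List.perm_append_singleton a (b :: l)).nodup_iff.2 hnodup

section Walk

open SimpleGraph

variable {W : Type*} {G : SimpleGraph W}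

theorem odd_length_of_isPath_of_adj
    (hG : ∀ (w : W) (c : G.Walk w w), c.IsCycle → Even c.length)
    {u v : W} (huv : G.Adj u v) {p : G.Walk v u} (hp : p.IsPath) : Odd p.length := by
  by_cases he : s(u, v) ∈ p.edges
  · rw [hp.length_eq_one_of_mem_edges (Sym2.eq_swap ▸ he)]
    exact odd_one
  · have heven := hG u _ ((Walk.cons_isCycle_iff p huv).2 ⟨hp, he⟩)
    rw [Walk.length_cons] at heven
    grind

theorem even_length_bypass_iff [DecidableEq W]
    (hG : ∀ (w : W) (c : G.Walk w w), c.IsCycle → Even c.length) {u v : W} (p : G.Walk u v) :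
    Even p.bypass.length ↔ Even p.length := by
  induction p with
  | nil => rfl
  | @cons u x v hux p ih =>
    rw [Walk.bypass]
    split_ifs with hu
    · have hodd := odd_length_of_isPath_of_adj hG hux (p.bypass_isPath.takeUntil hu)
      have hlen := congrArg Walk.length (p.bypass.take_spec hu)
      rw [Walk.length_append] at hlen
      rw [Walk.length_cons]
      grind
    · simp only [Walk.length_cons, Nat.even_add_one, ih]

theorem colorable_two_of_forall_isCycle_even
    (hG : ∀ (w : W) (c : G.Walk w w), c.IsCycle → Even c.length) : G.Colorable 2 := by
  classical
  refine two_colorable_iff_forall_loop_even.2 fun u p => ?_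
  have hnil : p.bypass.Nil := Walk.isPath_iff_nil.1 p.bypass_isPath
  rw [← even_length_bypass_iff hG, Walk.length_eq_zero_iff.2 hnil]
  exact Even.zero

theorem isChain_darts_of_isCycle_cons {u v : W} {h : G.Adj u v} {p : G.Walk v u}
    (hc : (Walk.cons h p).IsCycle) :
    List.IsChain (fun d e : G.Dart => G.DartAdj d e ∧ d.edge ≠ e.edge)
      (⟨(u, v), h⟩ :: (p.darts ++ [⟨(u, v), h⟩])) := by
  have hadj : List.IsChain G.DartAdj (⟨(u, v), h⟩ :: (p.darts ++ [⟨(u, v), h⟩])) := by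
    simpa using (Walk.cons h (p.concat h)).isChain_dartAdj_darts
  have hp : p.edges ≠ [] := fun hnil =>
    Walk.not_nil_of_isCycle_cons hc (Walk.edges_eq_nil.1 hnil)
  have hedge : List.IsChain (fun d e : G.Dart => d.edge ≠ e.edge)
      (⟨(u, v), h⟩ :: (p.darts ++ [⟨(u, v), h⟩])) := by
    rw [← List.isChain_map Dart.edge (R := (· ≠ ·))]
    simpa [Walk.edges] using isChain_ne_cons_append_singleton hp hc.edges_nodup
  rw [List.isChain_iff_getElem] at hadj hedge ⊢
  exact fun i hi => ⟨hadj i hi, hedge i hi⟩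

end Walk

section EdgeAdjEntries

variable {W : Type*} [DecidableEq W] (G : SimpleGraph W) [DecidableRel G.Adj]

theorem edgeAdj_map {R S : Type*} [Ring R] [Ring S] (f : R →+* S) :
    (edgeAdj R G).map f = edgeAdj S G := by
  ext d e
  simp only [edgeAdj, map_apply, apply_ite f, map_one, map_zero]

variable {R : Type*} [Ring R] [PartialOrder R] [IsOrderedRing R]

theorem edgeAdj_apply_nonneg (d e : G.Dart) : 0 ≤ edgeAdj R G d e := by
  unfold edgeAdj
  split_ifs <;> simp

variable {G} in
theorem edgeAdj_apply_pos [Nontrivial R] {d e : G.Dart} (hadj : G.DartAdj d e)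
    (hedge : d.edge ≠ e.edge) : 0 < edgeAdj R G d e := by
  have hback : d.fst ≠ e.snd := fun h =>
    hedge ((SimpleGraph.dart_edge_eq_iff d e).2 (.inr (SimpleGraph.Dart.ext _ _ (Prod.ext h hadj))))
  rw [edgeAdj, if_pos ⟨hadj, hback⟩]
  exact one_pos

end EdgeAdjEntries

section EdgeLaplacian

variable (G : SimpleGraph V) [DecidableRel G.Adj]

theorem degDiag_map {R S : Type*} [Ring R] [Ring S] (f : R →+* S) :
    (degDiag R G).map f = degDiag S G := by
  simp [degDiag, diagonal_map]

theorem degDiag_apply_nonneg {R : Type*} [Ring R] [PartialOrder R] [IsOrderedRing R]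
    (d e : G.Dart) : 0 ≤ degDiag R G d e := by
  have hdeg (d : G.Dart) : (1 : R) ≤ G.degree d.snd :=
    Nat.cast_one (R := R) ▸ Nat.mono_cast d.adj.degree_pos_right
  rw [degDiag, diagonal_apply]
  split_ifs
  · exact sub_nonneg.2 (hdeg d)
  · rfl

variable {G}

theorem exists_edgeAdj_pow_length_apply_self_pos {R : Type*} [Ring R] [PartialOrder R]
    [IsStrictOrderedRing R] {u : V} {c : G.Walk u u} (hc : c.IsCycle) :
    ∃ d, 0 < (edgeAdj R G ^ c.length) d d := by
  cases c with
  | nil => exact absurd hc SimpleGraph.Walk.not_isCycle_nil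
  | cons h p =>
    refine ⟨⟨(u, _), h⟩, ?_⟩
    rw [SimpleGraph.Walk.length_cons, ← p.length_darts]
    exact pow_apply_pos_of_isChain (edgeAdj_apply_nonneg G)
      ((isChain_darts_of_isCycle_cons hc).imp fun _ _ hde => edgeAdj_apply_pos hde.1 hde.2)

theorem trace_degDiag_sub_edgeAdj_pow_length_ne_trace_add {R : Type*} [Ring R] [CharZero R] {u : V}
    {c : G.Walk u u} (hc : c.IsCycle) (hodd : Odd c.length) :
    trace ((degDiag R G - edgeAdj R G) ^ c.length) ≠
      trace ((degDiag R G + edgeAdj R G) ^ c.length) := by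
  obtain ⟨d, hd⟩ := exists_edgeAdj_pow_length_apply_self_pos (R := ℤ) hc
  have hlt := trace_sub_pow_lt_trace_add_pow (degDiag_apply_nonneg G) (edgeAdj_apply_nonneg G)
    hodd hd
  let f := Int.castRingHom R
  have hD : f.mapMatrix (degDiag ℤ G) = degDiag R G := degDiag_map G f
  have hM : f.mapMatrix (edgeAdj ℤ G) = edgeAdj R G := edgeAdj_map G f
  have htrace (A : Matrix G.Dart G.Dart ℤ) : trace (f.mapMatrix A) = f (trace A) :=
    (AddMonoidHom.map_trace f A).symm
  rw [← hD, ← hM, ← map_sub, ← map_add, ← map_pow, ← map_pow, htrace, htrace]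
  exact fun h => hlt.ne (Int.cast_injective h)

theorem exists_isUnit_inv_mul_mul_eq_sub {R : Type*} [CommRing R] (c : G.Coloring Bool) :
    ∃ S : Matrix G.Dart G.Dart R, IsUnit S ∧
      S⁻¹ * (degDiag R G + edgeAdj R G) * S = degDiag R G - edgeAdj R G := by
  let sign (b : Bool) : R := if b then 1 else -1
  let S : Matrix G.Dart G.Dart R := diagonal fun d => sign (c d.fst)
  have sign_mul_self (b : Bool) : sign b * sign b = 1 := by cases b <;> simp [sign]
  have sign_mul_of_ne {a b : Bool} (h : a ≠ b) : sign a * sign b = -1 := by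
    cases a <;> cases b <;> simp_all [sign]
  have hSS : S * S = 1 := by
    simp only [S, diagonal_mul_diagonal, sign_mul_self, diagonal_one]
  have hSD : S * degDiag R G * S = degDiag R G := by
    rw [degDiag, (commute_diagonal _ _).eq, mul_assoc, hSS, mul_one]
  have hSM : S * edgeAdj R G * S = -edgeAdj R G := by
    ext d e
    rw [mul_diagonal, diagonal_mul, Matrix.neg_apply, mul_right_comm, edgeAdj]
    split_ifs with hde
    · rw [sign_mul_of_ne (hde.1 ▸ c.valid d.adj), mul_one]
    · rw [mul_zero, neg_zero]
  refine ⟨S, .of_mul_eq_one S hSS, ?_⟩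
  rw [inv_eq_left_inv hSS, mul_add, add_mul, hSD, hSM, sub_eq_add_neg]

end EdgeLaplacian

theorem stmt1_general {R : Type*} [CommRing R] [CharZero R] (G : SimpleGraph V)
    [DecidableRel G.Adj] :
    (∃ c : V → Bool, ∀ u v : V, G.Adj u v → c u ≠ c v) ↔
      ∃ S : Matrix G.Dart G.Dart R, IsUnit S ∧
        S⁻¹ * (degDiag R G + edgeAdj R G) * S = degDiag R G - edgeAdj R G := by
  constructor
  · rintro ⟨c, hc⟩
    exact exists_isUnit_inv_mul_mul_eq_sub (SimpleGraph.Coloring.mk c fun {u v} => hc u v)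
  · rintro ⟨S, hS, hconj⟩
    have hcycles (w : V) (p : G.Walk w w) (hp : p.IsCycle) : Even p.length := by
      by_contra hodd
      exact trace_degDiag_sub_edgeAdj_pow_length_ne_trace_add hp (Nat.not_even_iff_odd.1 hodd)
        (trace_pow_eq_of_inv_mul_mul_eq hS hconj p.length).symm
    let c : G.Coloring Bool :=
      (colorable_two_of_forall_isCycle_even hcycles).toColoring (by simp)
    exact ⟨c, fun u v huv => c.valid huv⟩

/-- If the edge adjacency matrix `M` of `X` is irreducible, then `X` is bipartite if and only
if `D + M` and `D - M` are similar. -/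
theorem stmt1 (G : SimpleGraph V) [DecidableRel G.Adj]
    (hirr : ∀ d e : G.Dart, ∃ k : ℕ, 1 ≤ k ∧ (edgeAdj ℝ G ^ k) d e ≠ 0) :
    (∃ c : V → Bool, ∀ u v : V, G.Adj u v → c u ≠ c v) ↔
      ∃ S : Matrix G.Dart G.Dart ℝ, IsUnit S ∧
        S⁻¹ * (degDiag ℝ G + edgeAdj ℝ G) * S = degDiag ℝ G - edgeAdj ℝ G := by
  exact stmt1_general G
end

section
/- Let X be a finite simple graph with edge adjacency matrix M = M(X) (with integer entries). Then M is nilpotent (i.e., M^k = 0 for some k) if and only if X is acyclic (a forest). -/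
open Matrix

variable {V : Type*} [Fintype V] [DecidableEq V]

/-!
A nonzero entry of the `k`-th power of the edge adjacency matrix gives a walk of length `k + 1`
without backtracking. In a forest such a walk is a path, so `k` is less than the number of vertices.

Conversely, a circulation (an antisymmetric function on darts satisfying Kirchhoff's law) is fixed
by the edge adjacency matrix: summing over all darts leaving the head of `d` gives `0`, and removing
the backtracking term contributes `-f (σ d) = f d`. The unit flow around a cycle is a nonzero
circulation, so a graph with a cycle has a matrix with a nonzero fixed vector. This works over
every nontrivial ring.
-/

open SimpleGraph

section Circulation

variable {G : SimpleGraph V} [DecidableRel G.Adj]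

/-- Circulations on a graph: antisymmetric functions on darts satisfying Kirchhoff's law at every
vertex. They are the fixed vectors used to show that the edge adjacency matrix is not nilpotent. -/
structure IsCirculation {A : Type*} [AddCommGroup A] (f : G.Dart → A) : Prop where
  map_symm : ∀ d, f d.symm = -f d
  sum_fst_eq_zero : ∀ v, ∑ e with e.fst = v, f e = 0

variable {R : Type*} [Ring R]

lemma edgeAdj_mulVec_apply (f : G.Dart → R) (d : G.Dart) :
    (edgeAdj R G *ᵥ f) d = ∑ e with e.fst = d.snd, f e - f d.symm := by
  have nonbacktracking_eq_erase :
      ({e | d.snd = e.fst ∧ d.fst ≠ e.snd} : Finset G.Dart) =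
        ({e | e.fst = d.snd} : Finset G.Dart).erase d.symm := by
    ext e
    simp only [Finset.mem_filter_univ, Finset.mem_erase, ne_eq, Dart.ext_iff, Prod.ext_iff,
      Dart.symm_toProd, Prod.fst_swap, Prod.snd_swap]
    grind
  calc (edgeAdj R G *ᵥ f) d
      = ∑ e with d.snd = e.fst ∧ d.fst ≠ e.snd, f e := by
        simp only [mulVec, dotProduct, edgeAdj, ite_mul, one_mul, zero_mul, Finset.sum_filter]
    _ = ∑ e with e.fst = d.snd, f e - f d.symm := by
        rw [nonbacktracking_eq_erase, Finset.sum_erase_eq_sub (by simp)]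

lemma IsCirculation.edgeAdj_mulVec {f : G.Dart → R} (hf : IsCirculation f) :
    edgeAdj R G *ᵥ f = f := by
  ext d
  rw [edgeAdj_mulVec_apply, hf.sum_fst_eq_zero, hf.map_symm, zero_sub, neg_neg]

lemma IsCirculation.edgeAdj_pow_mulVec {f : G.Dart → R} (hf : IsCirculation f) (k : ℕ) :
    edgeAdj R G ^ k *ᵥ f = f := by
  induction k with
  | zero => rw [pow_zero, one_mulVec]
  | succ k ih => rw [pow_succ, ← mulVec_mulVec, hf.edgeAdj_mulVec, ih]

lemma IsCirculation.eq_zero_of_isNilpotent {f : G.Dart → R} (hf : IsCirculation f)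
    (hM : IsNilpotent (edgeAdj R G)) : f = 0 := by
  obtain ⟨k, hk⟩ := hM
  rw [← hf.edgeAdj_pow_mulVec k, hk, zero_mulVec]

end Circulation

section WalkFlow

variable {W : Type*} [DecidableEq W] {G : SimpleGraph W} {u v w : W} (R : Type*) [Ring R]

/-- The unit flow along a walk: the number of traversals of each dart minus the number of traversals
of its reversal. For a closed walk this is a circulation. -/
def walkFlow (p : G.Walk u v) (d : G.Dart) : R :=
  p.darts.count d - p.darts.count d.symm

lemma walkFlow_symm (p : G.Walk u v) (d : G.Dart) : walkFlow R p d.symm = -walkFlow R p d := by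
  simp [walkFlow]

lemma walkFlow_cons (h : G.Adj u v) (p : G.Walk v w) :
    walkFlow R (p.cons h) =
      Pi.single ⟨(u, v), h⟩ 1 - Pi.single ⟨(v, u), h.symm⟩ 1 + walkFlow R p := by
  ext d
  have symm_eq_iff : (⟨(u, v), h⟩ : G.Dart) = d.symm ↔ d = ⟨(v, u), h.symm⟩ := by
    rw [eq_comm, Dart.symm_involutive.eq_iff]
    rfl
  simp only [walkFlow, Walk.darts_cons, List.count_cons, beq_iff_eq, symm_eq_iff, Pi.add_apply,
    Pi.sub_apply, Pi.single_apply, eq_comm (b := d), Nat.cast_add, Nat.cast_ite, Nat.cast_one,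
    Nat.cast_zero]
  abel

lemma sum_fst_walkFlow [Fintype W] [DecidableRel G.Adj] (p : G.Walk u w) (x : W) :
    ∑ e with e.fst = x, walkFlow R p e = (if u = x then 1 else 0) - (if w = x then 1 else 0) := by
  induction p with
  | nil => simp [walkFlow]
  | cons h p ih =>
    simp only [walkFlow_cons, Pi.add_apply, Pi.sub_apply, Finset.sum_add_distrib,
      Finset.sum_sub_distrib, Finset.sum_pi_single', Finset.mem_filter_univ, ih]
    abel

lemma isCirculation_walkFlow [Fintype W] [DecidableRel G.Adj] (p : G.Walk v v) :
    IsCirculation (walkFlow R p) where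
  map_symm := walkFlow_symm R p
  sum_fst_eq_zero x := by rw [sum_fst_walkFlow, sub_self]

lemma walkFlow_eq_one_of_isTrail {p : G.Walk u v} (hp : p.IsTrail) {d : G.Dart}
    (hd : d ∈ p.darts) : walkFlow R p d = 1 := by
  have edges_nodup : (p.darts.map Dart.edge).Nodup := hp.edges_nodup
  have symm_notMem : d.symm ∉ p.darts := fun hsymm =>
    d.symm_ne (List.inj_on_of_nodup_map edges_nodup hsymm hd d.edge_symm)
  rw [walkFlow, List.count_eq_one_of_mem edges_nodup.of_map hd,
    List.count_eq_zero_of_not_mem symm_notMem, Nat.cast_one, Nat.cast_zero, sub_zero]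

lemma walkFlow_ne_zero_of_isCircuit [Nontrivial R] {p : G.Walk v v} (hp : p.IsCircuit) :
    walkFlow R p ≠ 0 := by
  obtain ⟨d, hd⟩ := List.exists_mem_of_ne_nil p.darts (mt Walk.darts_eq_nil.mp hp.not_nil)
  intro h
  exact one_ne_zero ((walkFlow_eq_one_of_isTrail R hp.isTrail hd).symm.trans (congrFun h d))

end WalkFlow

section Powers

variable {R : Type*} [Ring R] {G : SimpleGraph V} [DecidableRel G.Adj]

lemma snd_eq_fst_and_edge_ne_of_edgeAdj_ne_zero {W : Type*} [DecidableEq W] {G : SimpleGraph W}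
    [DecidableRel G.Adj] {d e : G.Dart} (h : edgeAdj R G d e ≠ 0) :
    d.snd = e.fst ∧ d.edge ≠ e.edge := by
  obtain ⟨snd_eq_fst, fst_ne_snd⟩ : d.snd = e.fst ∧ d.fst ≠ e.snd := by
    by_contra hde
    exact h (if_neg hde)
  refine ⟨snd_eq_fst, fun edge_eq => ?_⟩
  rcases (dart_edge_eq_iff d e).mp edge_eq with rfl | rfl
  · exact d.snd_ne_fst snd_eq_fst
  · exact fst_ne_snd rfl

lemma exists_walk_of_edgeAdj_pow_ne_zero {k : ℕ} {d e : G.Dart} (h : (edgeAdj R G ^ k) d e ≠ 0) :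
    ∃ q : G.Walk d.snd e.snd, q.length = k ∧ (q.cons d.adj).edges.IsChain (· ≠ ·) := by
  induction k generalizing d with
  | zero =>
    obtain rfl : d = e := by
      by_contra hne
      exact h (by rw [pow_zero, one_apply_ne hne])
    exact ⟨.nil, rfl, List.isChain_singleton _⟩
  | succ k ih =>
    rw [pow_succ', mul_apply] at h
    obtain ⟨f, -, hf⟩ := Finset.exists_ne_zero_of_sum_ne_zero h
    obtain ⟨snd_eq_fst, edge_ne⟩ :=
      snd_eq_fst_and_edge_ne_of_edgeAdj_ne_zero (left_ne_zero_of_mul hf)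
    obtain ⟨q, length_q, nonbacktracking⟩ := ih (right_ne_zero_of_mul hf)
    obtain ⟨⟨a, b⟩, hab⟩ := d
    obtain ⟨⟨_, c⟩, hbc⟩ := f
    obtain rfl : b = _ := snd_eq_fst
    exact ⟨q.cons hbc, congrArg (· + 1) length_q,
      List.isChain_cons_cons.mpr ⟨edge_ne, nonbacktracking⟩⟩

lemma edgeAdj_pow_card_eq_zero (hG : G.IsAcyclic) : edgeAdj R G ^ Fintype.card V = 0 := by
  ext d e
  by_contra h
  obtain ⟨q, length_q, nonbacktracking⟩ := exists_walk_of_edgeAdj_pow_ne_zero h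
  have isPath : (q.cons d.adj).IsPath := (hG.isPath_iff_isChain _).mpr nonbacktracking
  have length_lt := isPath.length_lt
  rw [Walk.length_cons, length_q] at length_lt
  lia

end Powers

theorem stmt2_general (R : Type*) [Ring R] [Nontrivial R] (G : SimpleGraph V)
    [DecidableRel G.Adj] : IsNilpotent (edgeAdj R G) ↔ G.IsAcyclic := by
  refine ⟨fun hM v c hc => ?_, fun hG => ⟨_, edgeAdj_pow_card_eq_zero hG⟩⟩
  exact walkFlow_ne_zero_of_isCircuit R hc.isCircuit
    ((isCirculation_walkFlow R c).eq_zero_of_isNilpotent hM)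

/-- The edge adjacency matrix (with integer entries) is nilpotent if and only if the graph
is a forest. -/
theorem stmt2 (G : SimpleGraph V) [DecidableRel G.Adj] :
    IsNilpotent (edgeAdj ℤ G) ↔ G.IsAcyclic :=
  stmt2_general ℤ G
end

section
/- Let X be a finite connected simple graph. Then the characteristic polynomial (over ℚ) of the edge Laplacian N(X) equals the characteristic polynomial of the diagonal matrix D(X) if and only if X is a tree (i.e., X is acyclic). -/
open Matrix

variable {V : Type*} [Fintype V] [DecidableEq V]

/-- The edge Laplacian `N = D - M`. -/
def edgeLap (R : Type*) [Ring R] (G : SimpleGraph V) [DecidableRel G.Adj] :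
    Matrix G.Dart G.Dart R :=
  degDiag R G - edgeAdj R G

/-!
Expand `det (X - D + M)` over permutations: a permutation `σ` contributes, up to sign, the weight
`∏ M i (σ i)` over its support times a monic polynomial whose degree is the number of fixed points
of `σ`. Hence the characteristic polynomials agree when every nontrivial weight vanishes.
Conversely, if `M` is nonnegative, a permutation of nonzero weight and minimal support size `k ≥ 2`
is a `k`-cycle; all these cycles have the same sign, so nothing cancels in the coefficient of degree
`n - k`, where `n` is the size of `M`. For the edge adjacency matrix, the permutations of nonzero
weight are those whose nontrivial orbits are non-backtracking closed walks, and such walks exist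
exactly when the graph has a cycle.
-/

section PermWeight

open Equiv Polynomial

variable {n R : Type*} [Fintype n] [DecidableEq n]

/-- The product of the entries of `M` that `σ` selects off the diagonal, that is, the total weight
of the nontrivial cycles of `σ` in the weighted digraph with adjacency matrix `M`. -/
def permWeight [CommMonoid R] (M : Matrix n n R) (σ : Perm n) : R :=
  ∏ i ∈ σ.support, M i (σ i)

section CommMonoidWithZero

variable [CommMonoidWithZero R]

lemma permWeight_cycleOf_ne_zero {M : Matrix n n R} {σ : Perm n} (hσ : permWeight M σ ≠ 0)
    (i : n) : permWeight M (σ.cycleOf i) ≠ 0 := by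
  refine ne_zero_of_dvd_ne_zero hσ ?_
  have hrestrict : permWeight M (σ.cycleOf i) = ∏ j ∈ (σ.cycleOf i).support, M j (σ j) :=
    Finset.prod_congr rfl fun j hj => by
      rw [(Perm.mem_support_cycleOf_iff.mp hj).1.cycleOf_apply]
  rw [hrestrict]
  exact Finset.prod_dvd_prod_of_subset _ _ _ (Perm.support_cycleOf_le σ i)

lemma isCycle_of_permWeight_ne_zero_of_minimal {M : Matrix n n R} {σ : Perm n} (hσ : σ ≠ 1)
    (hweight : permWeight M σ ≠ 0)
    (hmin : ∀ τ : Perm n, τ ≠ 1 → τ.support.card < σ.support.card → permWeight M τ = 0) :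
    σ.IsCycle := by
  obtain ⟨i, hi⟩ : ∃ i, σ i ≠ i := by simpa [Perm.ext_iff] using hσ
  have hcard : σ.support.card ≤ (σ.cycleOf i).support.card := not_lt.mp fun hlt =>
    permWeight_cycleOf_ne_zero hweight i (hmin _ (σ.isCycle_cycleOf hi).ne_one hlt)
  have hsupport : (σ.cycleOf i).support = σ.support :=
    Finset.eq_of_subset_of_card_le (Perm.support_cycleOf_le σ i) hcard
  refine ⟨i, hi, fun j hj => ?_⟩
  rw [← Perm.mem_support, ← hsupport] at hj
  exact (Perm.mem_support_cycleOf_iff.mp hj).1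

end CommMonoidWithZero

variable [CommRing R]

lemma prod_charmatrix_diagonal_sub (f : n → R) {M : Matrix n n R} (hM : ∀ i, M i i = 0)
    (σ : Perm n) :
    ∏ i, (diagonal f - M).charmatrix i (σ i) =
      C (permWeight M σ) * ∏ i ∈ σ.supportᶜ, (X - C (f i)) := by
  rw [← Finset.prod_mul_prod_compl σ.support, permWeight, map_prod]
  congr 1 <;> refine Finset.prod_congr rfl fun i hi => ?_
  · have hσi : i ≠ σ i := (Perm.mem_support.mp hi).symm
    simp [charmatrix_apply_ne _ _ _ hσi, diagonal_apply_ne _ hσi]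
  · have hσi : σ i = i := Perm.notMem_support.mp (Finset.mem_compl.mp hi)
    simp [hσi, charmatrix_apply_eq, hM]

lemma charpoly_diagonal_sub (f : n → R) {M : Matrix n n R} (hM : ∀ i, M i i = 0) :
    (diagonal f - M).charpoly = (diagonal f).charpoly +
      ∑ σ : Perm n with σ ≠ 1,
        Perm.sign σ • (C (permWeight M σ) * ∏ i ∈ σ.supportᶜ, (X - C (f i))) := by
  have hexpansion : (diagonal f - M).charpoly = ∑ σ : Perm n,
      Perm.sign σ • (C (permWeight M σ) * ∏ i ∈ σ.supportᶜ, (X - C (f i))) := by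
    rw [charpoly, ← det_transpose, det_apply]
    simp only [transpose_apply, prod_charmatrix_diagonal_sub f hM]
  rw [hexpansion, ← Finset.add_sum_erase _ _ (Finset.mem_univ 1), Finset.filter_ne',
    charpoly, charmatrix_diagonal, det_diagonal]
  simp [permWeight]

lemma coeff_C_mul_prod_X_sub_C (f : n → R) (a : R) {s : Finset n} {k : ℕ} (hk : k ≤ s.card) :
    (C a * ∏ i ∈ sᶜ, (X - C (f i))).coeff (Fintype.card n - k) = if s.card = k then a else 0 := by
  nontriviality R
  have hdeg : (∏ i ∈ sᶜ, (X - C (f i))).natDegree = Fintype.card n - s.card := by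
    rw [natDegree_finsetProd_X_sub_C_eq_card, Finset.card_compl]
  rw [coeff_C_mul]
  split_ifs with h
  · rw [← h, ← hdeg, (monic_prod_X_sub_C f sᶜ).coeff_natDegree, mul_one]
  · have := s.card_le_univ
    rw [coeff_eq_zero_of_natDegree_lt (by omega), mul_zero]

lemma coeff_sign_smul_permWeight (f : n → R) {M : Matrix n n R} {k : ℕ}
    (hk : ∀ τ : Perm n, τ ≠ 1 → τ.support.card < k → permWeight M τ = 0)
    {σ : Perm n} (hσ : σ ≠ 1) :
    (Perm.sign σ • (C (permWeight M σ) * ∏ i ∈ σ.supportᶜ, (X - C (f i)))).coeff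
      (Fintype.card n - k) =
      (-(-1) ^ k : ℤˣ) • if σ.support.card = k then permWeight M σ else 0 := by
  by_cases hweight : permWeight M σ = 0
  · simp [hweight]
  have hle : k ≤ σ.support.card := not_lt.mp fun hlt => hweight (hk σ hσ hlt)
  rw [Units.smul_def, coeff_smul, coeff_C_mul_prod_X_sub_C f _ hle, ← Units.smul_def]
  split_ifs with hcard
  · subst hcard
    rw [(isCycle_of_permWeight_ne_zero_of_minimal hσ hweight hk).sign]
  · simp only [smul_zero]

lemma permWeight_eq_zero_of_charpoly_eq [PartialOrder R] [IsOrderedRing R] {f : n → R}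
    {M : Matrix n n R} (hdiag : ∀ i, M i i = 0) (hnonneg : ∀ i j, 0 ≤ M i j)
    (h : (diagonal f - M).charpoly = (diagonal f).charpoly) {σ : Perm n} (hσ : σ ≠ 1) :
    permWeight M σ = 0 := by
  induction hk : σ.support.card using Nat.strong_induction_on generalizing σ with
  | _ k ih =>
    have hmin : ∀ τ : Perm n, τ ≠ 1 → τ.support.card < k → permWeight M τ = 0 :=
      fun τ hτ hlt => ih _ hlt hτ rfl
    have hsum : ∑ τ : Perm n with τ ≠ 1,
        (if τ.support.card = k then permWeight M τ else 0) = 0 := by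
      have hcoeff := congrArg (coeff · (Fintype.card n - k))
        (left_eq_add.mp (h.symm.trans (charpoly_diagonal_sub f hdiag)))
      simp only [finsetSum_coeff, coeff_zero] at hcoeff
      rwa [Finset.sum_congr rfl fun τ hτ =>
          coeff_sign_smul_permWeight f hmin (Finset.mem_filter.mp hτ).2,
        ← Finset.smul_sum, smul_eq_zero_iff_eq] at hcoeff
    have hterm_nonneg (τ : Perm n) :
        0 ≤ if τ.support.card = k then permWeight M τ else 0 := by
      split_ifs
      exacts [Finset.prod_nonneg fun i _ => hnonneg i _, le_rfl]
    have hterm := (Finset.sum_eq_zero_iff_of_nonneg fun τ _ => hterm_nonneg τ).mp hsum σ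
      (by simpa using hσ)
    rwa [if_pos hk] at hterm

theorem charpoly_diagonal_sub_eq_iff [PartialOrder R] [IsOrderedRing R] (f : n → R)
    {M : Matrix n n R} (hdiag : ∀ i, M i i = 0) (hnonneg : ∀ i j, 0 ≤ M i j) :
    (diagonal f - M).charpoly = (diagonal f).charpoly ↔
      ∀ σ : Perm n, σ ≠ 1 → permWeight M σ = 0 := by
  refine ⟨fun h σ => permWeight_eq_zero_of_charpoly_eq hdiag hnonneg h, fun h => ?_⟩
  rw [charpoly_diagonal_sub f hdiag, add_eq_left]
  exact Finset.sum_eq_zero fun σ hσ => by simp [h σ (Finset.mem_filter.mp hσ).2]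

end PermWeight

section NonBacktracking

open Equiv SimpleGraph

variable {U : Type*} {H : SimpleGraph U}

/-- The dart `e` may follow `d` in a non-backtracking walk. Requiring distinct underlying edges
rather than `e ≠ d.symm` is equivalent, since a dart cannot follow itself. -/
def NonBacktracking (d e : H.Dart) : Prop :=
  H.DartAdj d e ∧ d.edge ≠ e.edge

lemma nonBacktracking_iff {d e : H.Dart} :
    NonBacktracking d e ↔ d.snd = e.fst ∧ d.fst ≠ e.snd := by
  refine and_congr_right fun (h : d.snd = e.fst) => not_congr ?_
  rw [Dart.edge, Dart.edge, Sym2.eq_iff]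
  simp [h]

lemma exists_walk_edges_eq_map_range {d : ℕ → H.Dart} (hd : ∀ i, H.DartAdj (d i) (d (i + 1)))
    (k : ℕ) :
    ∃ p : H.Walk (d 0).fst (d k).fst, p.edges = (List.range k).map fun i => (d i).edge := by
  induction k with
  | zero => exact ⟨.nil, rfl⟩
  | succ k ih =>
    obtain ⟨p, hp⟩ := ih
    have hadj : H.Adj (d k).fst (d (k + 1)).fst := (hd k : (d k).snd = _) ▸ (d k).adj
    refine ⟨p.concat hadj, ?_⟩
    have hedge : s((d k).fst, (d (k + 1)).fst) = (d k).edge := by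
      rw [← (hd k : (d k).snd = _), Dart.edge]
    rw [Walk.edges_concat, hp, hedge, List.range_succ, List.map_append, List.concat_eq_append,
      List.map_singleton]

lemma fst_ne_fst_of_nonBacktracking (hH : H.IsAcyclic) {d : ℕ → H.Dart}
    (hd : ∀ i, NonBacktracking (d i) (d (i + 1))) {k : ℕ} (hk : k ≠ 0) :
    (d 0).fst ≠ (d k).fst := by
  intro hclosed
  obtain ⟨p, hp⟩ := exists_walk_edges_eq_map_range (fun i => (hd i).1) k
  have hpath : p.IsPath := by
    rw [hH.isPath_iff_isChain, hp, List.isChain_map, List.isChain_range]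
    exact fun i _ => (hd i).2
  have hnil : (p.copy rfl hclosed.symm).Nil := by
    rwa [← Walk.isPath_iff_nil, Walk.isPath_copy]
  have hlength : p.length = k := by simpa using congrArg List.length hp
  exact hk (by simpa [hlength] using Walk.length_eq_zero_iff.mpr hnil)

lemma eq_one_of_forall_nonBacktracking [Finite H.Dart] (hH : H.IsAcyclic) {σ : Perm H.Dart}
    (hσ : ∀ d, σ d ≠ d → NonBacktracking d (σ d)) : σ = 1 := by
  by_contra hne
  obtain ⟨d, hd⟩ : ∃ d, σ d ≠ d := by simpa [Perm.ext_iff] using hne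
  have horbit (i : ℕ) : NonBacktracking ((σ ^ i) d) ((σ ^ (i + 1)) d) := by
    rw [pow_succ', Perm.mul_apply]
    refine hσ _ fun hfix => hd ((σ ^ i).injective ?_)
    rwa [← Perm.mul_apply, ← pow_succ, pow_succ', Perm.mul_apply]
  refine fst_ne_fst_of_nonBacktracking hH horbit (orderOf_pos σ).ne' ?_
  rw [pow_orderOf_eq_one, pow_zero]

lemma nonBacktracking_darts_getElem {v : U} {c : H.Walk v v} (hc : c.IsCircuit) {i : ℕ}
    (hi : i < c.darts.length) :
    NonBacktracking c.darts[i]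
      (c.darts[(i + 1) % c.darts.length]'(Nat.mod_lt _ (i.zero_le.trans_lt hi))) := by
  have hlength := hc.three_le_length
  rw [Walk.length_darts] at hi
  have hcases : i + 1 < c.length ∨ i + 1 = c.length := by omega
  constructor
  · rcases hcases with h | h
    · simp [DartAdj, Walk.darts_getElem_eq_getVert, Nat.mod_eq_of_lt h]
    · simp [DartAdj, Walk.darts_getElem_eq_getVert, h]
  · simp only [Walk.edge_getElem_darts, ne_eq, hc.edges_nodup.getElem_inj_iff, Walk.length_darts]
    rcases hcases with h | h
    · simp [Nat.mod_eq_of_lt h]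
    · rw [h, Nat.mod_self]
      omega

lemma exists_perm_ne_one_nonBacktracking {v : U} {c : H.Walk v v} (hc : c.IsCircuit) :
    ∃ σ : Perm H.Dart, σ ≠ 1 ∧ ∀ d, σ d ≠ d → NonBacktracking d (σ d) := by
  classical
  have hnodup : c.darts.Nodup := .of_map _ hc.edges_nodup
  refine ⟨c.darts.formPerm, ?_, fun d hd => ?_⟩
  · have hlength := hc.three_le_length
    rw [ne_eq, List.formPerm_eq_one_iff _ hnodup, Walk.length_darts]
    omega
  · obtain ⟨i, hi, rfl⟩ := List.getElem_of_mem (List.mem_of_formPerm_apply_ne hd)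
    rw [List.formPerm_apply_getElem _ hnodup]
    exact nonBacktracking_darts_getElem hc hi

theorem isAcyclic_iff_forall_perm_nonBacktracking [Finite H.Dart] :
    H.IsAcyclic ↔
      ∀ σ : Perm H.Dart, (∀ d, σ d ≠ d → NonBacktracking d (σ d)) → σ = 1 := by
  refine ⟨fun hH σ => eq_one_of_forall_nonBacktracking hH, fun h v c hc => ?_⟩
  obtain ⟨σ, hne, hσ⟩ := exists_perm_ne_one_nonBacktracking hc.isCircuit
  exact hne (h σ hσ)

section EdgeAdj

variable {R : Type*} [Ring R] [DecidableEq U] [DecidableRel H.Adj]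

lemma edgeAdj_self (d : H.Dart) : edgeAdj R H d d = 0 :=
  if_neg fun h => d.snd_ne_fst h.1

lemma edgeAdj_nonneg [PartialOrder R] [IsOrderedRing R] (d e : H.Dart) :
    0 ≤ edgeAdj R H d e := by
  unfold edgeAdj
  split_ifs
  exacts [zero_le_one, le_rfl]

lemma edgeAdj_ne_zero_iff [Nontrivial R] {d e : H.Dart} :
    edgeAdj R H d e ≠ 0 ↔ NonBacktracking d e := by
  rw [nonBacktracking_iff]
  simp [edgeAdj]

end EdgeAdj

end NonBacktracking

section EdgeLaplacian

variable (R : Type*) [CommRing R] (G : SimpleGraph V) [DecidableRel G.Adj]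

variable {R G} in
lemma permWeight_edgeAdj_ne_zero_iff [IsDomain R] {σ : Equiv.Perm G.Dart} :
    permWeight (edgeAdj R G) σ ≠ 0 ↔ ∀ d, σ d ≠ d → NonBacktracking d (σ d) := by
  simp only [permWeight, Finset.prod_ne_zero_iff, Equiv.Perm.mem_support, edgeAdj_ne_zero_iff]

lemma charpoly_edgeLap_eq_iff_int [CharZero R] :
    (edgeLap R G).charpoly = (degDiag R G).charpoly ↔
      (edgeLap ℤ G).charpoly = (degDiag ℤ G).charpoly := by
  have hdegDiag : degDiag R G = (degDiag ℤ G).map (Int.castRingHom R) := by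
    simp [degDiag, diagonal_map]
  have hedgeAdj : edgeAdj R G = (edgeAdj ℤ G).map (Int.castRingHom R) := by
    ext d e
    simp [edgeAdj]
  have hedgeLap : edgeLap R G = (edgeLap ℤ G).map (Int.castRingHom R) := by
    rw [edgeLap, hdegDiag, hedgeAdj, edgeLap, Matrix.map_sub _ (map_sub _)]
  rw [hedgeLap, hdegDiag, charpoly_map, charpoly_map,
    (Polynomial.map_injective _ (RingHom.injective_int (Int.castRingHom R))).eq_iff]

theorem stmt3_general [CharZero R] :
    (edgeLap R G).charpoly = (degDiag R G).charpoly ↔ G.IsAcyclic := by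
  rw [charpoly_edgeLap_eq_iff_int, edgeLap, degDiag,
    charpoly_diagonal_sub_eq_iff _ edgeAdj_self edgeAdj_nonneg,
    isAcyclic_iff_forall_perm_nonBacktracking]
  exact forall_congr' fun σ =>
    not_imp_comm.trans (imp_congr_left permWeight_edgeAdj_ne_zero_iff)

end EdgeLaplacian

/-- For a connected graph `X`, the eigenvalues of `N` are those of `D` (i.e. the characteristic
polynomials coincide) if and only if `X` is a tree. -/
theorem stmt3 (G : SimpleGraph V) [DecidableRel G.Adj] (hconn : G.Connected) :
    (edgeLap ℚ G).charpoly = (degDiag ℚ G).charpoly ↔ G.IsAcyclic :=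
  stmt3_general ℚ G
end

section
/- Let X be a finite tree (a connected acyclic simple graph). Then the characteristic polynomial (over ℚ) of the edge Laplacian N(X) equals ∏_{v ∈ V(X)} (x − (deg(v) − 1))^{deg(v)}. In particular, for each vertex v of X, deg(v) − 1 is an eigenvalue of N(X) with algebraic multiplicity deg(v). -/
open Matrix Polynomial

variable {V : Type*} [Fintype V] [DecidableEq V]

/-!
Order the darts of a forest by the set of vertices lying behind them. A dart that follows `d`
without backtracking has everything behind `d` behind it, and the head of `d` as well, so this
order makes `N` upper triangular. The diagonal entry at `d` is `deg(head d) - 1`, and exactly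
`deg v` darts have head `v`.
-/

theorem exists_linearOrder_lt_of_map_lt {ι α : Type*} [Preorder α] (b : ι → α) :
    ∃ _ : LinearOrder ι, ∀ i j, b i < b j → i < j := by
  let _ : PartialOrder ι :=
    { le i j := i = j ∨ b i < b j
      le_refl _ := .inl rfl
      le_trans i j k := by
        rintro (rfl | hij) (rfl | hjk)
        exacts [.inl rfl, .inr hjk, .inr hij, .inr (hij.trans hjk)]
      le_antisymm i j := by
        rintro (rfl | hij) (hji | hji)
        exacts [rfl, rfl, hji.symm, (lt_asymm hij hji).elim] }
  have toLinearExtension_injective : Function.Injective (toLinearExtension (α := ι)) :=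
    fun _ _ h ↦ h
  refine ⟨LinearOrder.lift' toLinearExtension toLinearExtension_injective, fun i j hij ↦ ?_⟩
  have hlt : i < j := lt_of_le_of_ne (Or.inr hij) fun h ↦ hij.ne (congrArg b h)
  exact toLinearExtension.monotone.strictMono_of_injective toLinearExtension_injective hlt

theorem charpoly_eq_prod_of_map_lt {n α R : Type*} [Fintype n] [DecidableEq n] [Preorder α]
    [CommRing R] (A : Matrix n n R) (b : n → α)
    (h : ∀ i j, i ≠ j → A i j ≠ 0 → b i < b j) :
    A.charpoly = ∏ i, (X - C (A i i)) := by
  obtain ⟨_, lt_of_map_lt⟩ := exists_linearOrder_lt_of_map_lt b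
  refine A.charpoly_of_isUpperTriangular fun i j hji ↦ ?_
  by_contra hij
  exact lt_asymm hji (lt_of_map_lt i j (h i j hji.ne' hij))

section Behind

variable {W : Type*} {G : SimpleGraph W}

/-- The vertices behind a dart `d`: those that can be reached from its tail without using its edge.
If the edge of `d` is a bridge, this is the component on the tail side of `d`. -/
def behind (d : G.Dart) : Set W :=
  {w | (G.deleteEdges {d.edge}).Reachable d.fst w}

theorem fst_mem_behind (d : G.Dart) : d.fst ∈ behind d :=
  SimpleGraph.Reachable.refl _

theorem snd_notMem_behind {d : G.Dart} (hd : G.IsBridge d.edge) : d.snd ∉ behind d :=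
  hd

theorem behind_subset_behind {d e : G.Dart} (hd : G.IsBridge d.edge)
    (head_eq_tail : d.snd = e.fst) (not_backtrack : d.fst ≠ e.snd) : behind d ⊆ behind e := by
  classical
  rintro w ⟨p⟩
  have snd_notMem_support : d.snd ∉ p.support := fun h ↦
    snd_notMem_behind hd (p.takeUntil _ h).reachable
  have edge_notMem_edges : e.edge ∉ p.edges := fun h ↦
    snd_notMem_support (head_eq_tail ▸ p.fst_mem_support_of_mem_edges h)
  have reachable_fst_fst : (G.deleteEdges {e.edge}).Reachable e.fst d.fst := by
    refine SimpleGraph.Adj.reachable (SimpleGraph.deleteEdges_adj.mpr ⟨?_, ?_⟩)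
    · exact head_eq_tail ▸ d.adj.symm
    · simpa [← head_eq_tail, SimpleGraph.Dart.edge] using not_backtrack
  have reachable_fst : (G.deleteEdges {e.edge}).Reachable d.fst w :=
    SimpleGraph.reachable_deleteEdges_iff_exists_walk.mpr
      ⟨p.mapLe (G.deleteEdges_le _), (p.edges_mapLe_eq_edges _).symm ▸ edge_notMem_edges⟩
  exact reachable_fst_fst.trans reachable_fst

theorem behind_ssubset_behind {d e : G.Dart} (hd : G.IsBridge d.edge)
    (head_eq_tail : d.snd = e.fst) (not_backtrack : d.fst ≠ e.snd) : behind d ⊂ behind e :=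
  (Set.ssubset_iff_of_subset (behind_subset_behind hd head_eq_tail not_backtrack)).mpr
    ⟨d.snd, head_eq_tail ▸ fst_mem_behind e, snd_notMem_behind hd⟩

end Behind

section DartHeads

variable {W M : Type*} [Fintype W] (G : SimpleGraph W) [DecidableRel G.Adj]

theorem card_dart_snd_eq_degree [DecidableEq W] (v : W) :
    Finset.card {d : G.Dart | d.snd = v} = G.degree v := by
  rw [← G.dart_fst_fiber_card_eq_degree v]
  exact Finset.card_equiv SimpleGraph.Dart.symm_involutive.toPerm (by simp)

theorem prod_dart_snd_eq_prod_pow_degree [CommMonoid M] (f : W → M) :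
    ∏ d : G.Dart, f d.snd = ∏ v, f v ^ G.degree v := by
  have := Classical.decEq W
  rw [← Finset.prod_fiberwise' Finset.univ (fun d : G.Dart ↦ d.snd)]
  simp only [Finset.prod_const, card_dart_snd_eq_degree]

end DartHeads

section EdgeLaplacian

variable {R : Type*} (G : SimpleGraph V) [DecidableRel G.Adj]

theorem edgeLap_apply_self [Ring R] (d : G.Dart) :
    edgeLap R G d d = (G.degree d.snd : R) - 1 := by
  simp [edgeLap, degDiag, edgeAdj, d.adj.ne']

variable {G} in
theorem snd_eq_fst_and_ne_of_edgeLap_apply_ne_zero [Ring R] {d e : G.Dart} (hne : d ≠ e)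
    (h : edgeLap R G d e ≠ 0) : d.snd = e.fst ∧ d.fst ≠ e.snd := by
  by_contra not_follows
  have edgeAdj_eq_zero : edgeAdj R G d e = 0 := if_neg not_follows
  exact h (by simp [edgeLap, degDiag, edgeAdj_eq_zero, hne])

theorem stmt4_general [CommRing R] (hacyc : G.IsAcyclic) :
    (edgeLap R G).charpoly = ∏ v : V, (X - C ((G.degree v : R) - 1)) ^ G.degree v := by
  have behind_lt (d e : G.Dart) (hne : d ≠ e) (h : edgeLap R G d e ≠ 0) : behind d < behind e :=
    have ⟨head_eq_tail, not_backtrack⟩ := snd_eq_fst_and_ne_of_edgeLap_apply_ne_zero hne h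
    have hd : G.IsBridge d.edge := SimpleGraph.isAcyclic_iff_forall_isBridge.mp hacyc d.edge_mem
    behind_ssubset_behind hd head_eq_tail not_backtrack
  calc (edgeLap R G).charpoly
      = ∏ d : G.Dart, (X - C (edgeLap R G d d)) := charpoly_eq_prod_of_map_lt _ behind behind_lt
    _ = ∏ d : G.Dart, (X - C ((G.degree d.snd : R) - 1)) := by simp_rw [edgeLap_apply_self]
    _ = ∏ v : V, (X - C ((G.degree v : R) - 1)) ^ G.degree v :=
      prod_dart_snd_eq_prod_pow_degree G fun v ↦ X - C ((G.degree v : R) - 1)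

end EdgeLaplacian

/-- For a tree `X`, the characteristic polynomial of the edge Laplacian equals
`∏_{v} (x - (deg v - 1))^(deg v)`; in particular each `deg v - 1` is an eigenvalue of `N`
with algebraic multiplicity `deg v`. -/
theorem stmt4 (G : SimpleGraph V) [DecidableRel G.Adj]
    (hconn : G.Connected) (hacyc : G.IsAcyclic) :
    (edgeLap ℚ G).charpoly = ∏ v : V, (X - C ((G.degree v : ℚ) - 1)) ^ (G.degree v) :=
  stmt4_general G hacyc
end

section
/- Let p, q ≥ 1 and let X = K_{p,q} be the complete bipartite graph with parts of sizes p and q. Set u = p + q − 2. Then the characteristic polynomial (over ℚ) of the edge Laplacian N(K_{p,q}) equals x · (x − u) · (x² − u·x + ((p−1)(q−1) − 1))^{(p−1)(q−1)} · (x² − u·x + p(q−1))^{p−1} · (x² − u·x + q(p−1))^{q−1}. (Equivalently, the eigenvalues of N(K_{p,q}) are 0 and u each with multiplicity 1, (u ± √((p−q)² + 4))/2 each with multiplicity (p−1)(q−1), (u ± √((p−q)² + 4(1−q)))/2 each with multiplicity p−1, and (u ± √((p−q)² + 4(1−p)))/2 each with multiplicity q−1.) -/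
open Matrix Polynomial

variable {V : Type*} [Fintype V] [DecidableEq V]

instance (p q : ℕ) : DecidableRel (completeBipartiteGraph (Fin p) (Fin q)).Adj := by
  unfold completeBipartiteGraph
  exact fun a b => instDecidableOr

/-!
Write a dart of `K_{p,q}` as an edge `(a, b)` together with one of its two orientations, and let `J`
be the all-ones matrix. The edge Laplacian then becomes `1 ⊗ (1 ⊗ A + J ⊗ C) + J ⊗ (1 ⊗ B)` with
`2 × 2` matrices `A`, `B`, `C`. Over any commutative ring the `n × n` matrix `J` is similar to an
upper triangular matrix with diagonal `(n, 0, …, 0)`, whence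
`charpoly (1 ⊗ A + J ⊗ B) = charpoly A ^ (n - 1) * charpoly (A + n B)` even when `A` and `B` do not
commute. Applying this once per side of the graph leaves four `2 × 2` characteristic polynomials:
those of `A`, `A + p B`, `A + q C` and `A + p B + q C`.
-/

open scoped Kronecker

section Charpoly

variable {R ι m : Type*} [CommRing R]

theorem charpoly_eq_of_mul_eq_mul [Fintype m] [DecidableEq m] {M N P : Matrix m m R}
    (hP : IsUnit P.det) (h : M * P = P * N) : M.charpoly = N.charpoly := by
  have hM : M = P * N * P⁻¹ := by rw [← h, mul_nonsing_inv_cancel_right _ _ hP]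
  rw [hM]
  exact charpoly_units_conj (P.nonsingInvUnit hP) N

theorem charpoly_one_kronecker_add_kronecker_of_isUpperTriangular [Fintype ι] [LinearOrder ι]
    [Fintype m] [DecidableEq m] {T : Matrix ι ι R} (hT : T.IsUpperTriangular) (A B : Matrix m m R) :
    (1 ⊗ₖ A + T ⊗ₖ B).charpoly = ∏ i, (A + T i i • B).charpoly := by
  cases isEmpty_or_nonempty m
  · simp [charpoly_isEmpty]
  have hblock : (1 ⊗ₖ A + T ⊗ₖ B).BlockTriangular Prod.fst := fun x y hxy => by
    simp [one_apply_ne' hxy.ne, hT hxy]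
  rw [hblock.charpoly, Finset.image_univ_of_surjective Prod.fst_surjective]
  refine Finset.prod_congr rfl fun i _ => ?_
  let e : {x : ι × m // x.1 = i} ≃ m :=
    ⟨fun x => x.1.2, fun k => ⟨(i, k), rfl⟩, by rintro ⟨⟨_, _⟩, rfl⟩; rfl, fun _ => rfl⟩
  have hdiag : reindex e e ((1 ⊗ₖ A + T ⊗ₖ B).toSquareBlock Prod.fst i) = A + T i i • B := by
    ext
    simp [e, toSquareBlock_def]
  rw [← charpoly_reindex e, hdiag]

/-- The square matrix `J` all of whose entries are `1`. -/
def allOnes (ι R : Type*) [One R] : Matrix ι ι R :=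
  of fun _ _ => 1

/-- The upper triangular form of `allOnes`: its row `0` is `(n + 1, 1, …, 1)`, all others vanish. -/
def allOnesTriangular (n : ℕ) (R : Type*) [AddMonoidWithOne R] :
    Matrix (Fin (n + 1)) (Fin (n + 1)) R :=
  updateRow 0 0 (Function.update 1 0 (n + 1))

theorem allOnesTriangular_isUpperTriangular (n : ℕ) : (allOnesTriangular n R).IsUpperTriangular :=
  fun i j (hij : j < i) => by simp [allOnesTriangular, updateRow_ne (Fin.ne_zero_of_lt hij)]

theorem det_one_updateCol [Fintype ι] [DecidableEq ι] (i : ι) (v : ι → R) :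
    ((1 : Matrix ι ι R).updateCol i v).det = v i := by
  rw [← cramer_apply, cramer_one, Module.End.one_apply]

-- The basis `(1, …, 1), e₁, …, eₙ` is unimodular, unlike an eigenbasis of `J`, which would require
-- dividing by `n + 1`.
theorem allOnes_mul_updateCol (n : ℕ) :
    allOnes (Fin (n + 1)) R * updateCol 1 0 1 = updateCol 1 0 1 * allOnesTriangular n R := by
  ext i j
  refine Fin.cases ?_ (fun j => ?_) j <;>
    simp [allOnes, allOnesTriangular, mul_apply, updateCol_apply, updateRow_apply, one_apply]

variable [Fintype m] [DecidableEq m]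

theorem charpoly_one_kronecker_add_allOnes_fin_kronecker (n : ℕ) (A B : Matrix m m R) :
    (1 ⊗ₖ A + allOnes (Fin (n + 1)) R ⊗ₖ B).charpoly =
      A.charpoly ^ n * (A + ((n : R) + 1) • B).charpoly := by
  have hconj : (1 ⊗ₖ A + allOnes (Fin (n + 1)) R ⊗ₖ B) * (updateCol 1 0 1 ⊗ₖ 1) =
      (updateCol 1 0 1 ⊗ₖ 1) * (1 ⊗ₖ A + allOnesTriangular n R ⊗ₖ B) := by
    simp only [add_mul, mul_add, ← mul_kronecker_mul, allOnes_mul_updateCol, one_mul, mul_one]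
  have hdet : IsUnit (updateCol 1 (0 : Fin (n + 1)) 1 ⊗ₖ (1 : Matrix m m R)).det := by
    simp [det_kronecker, det_one_updateCol]
  rw [charpoly_eq_of_mul_eq_mul hdet hconj,
    charpoly_one_kronecker_add_kronecker_of_isUpperTriangular
      (allOnesTriangular_isUpperTriangular n),
    Fin.prod_univ_succ]
  simp [allOnesTriangular, mul_comm]

theorem charpoly_one_kronecker_add_allOnes_kronecker [Fintype ι] [DecidableEq ι] [Nonempty ι]
    (A B : Matrix m m R) :
    (1 ⊗ₖ A + allOnes ι R ⊗ₖ B).charpoly =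
      A.charpoly ^ (Fintype.card ι - 1) * (A + (Fintype.card ι : R) • B).charpoly := by
  obtain ⟨n, hn⟩ := Nat.exists_eq_add_one.mpr (Fintype.card_pos (α := ι))
  let e := (Fintype.equivFinOfCardEq hn).prodCongr (Equiv.refl m)
  have hreindex : reindex e e (1 ⊗ₖ A + allOnes ι R ⊗ₖ B) =
      1 ⊗ₖ A + allOnes (Fin (n + 1)) R ⊗ₖ B := by
    ext
    simp [e, allOnes, one_apply]
  rw [← charpoly_reindex e, hreindex, charpoly_one_kronecker_add_allOnes_fin_kronecker, hn]
  simp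

end Charpoly

section CompleteBipartite

variable {α β : Type*}

/-- The darts of `K_{α,β}`: the triple `(a, b, i)` stands for the edge joining `a` and `b`, oriented
from `a` to `b` if `i = 0` and from `b` to `a` if `i = 1`. -/
def bipartiteDartEquiv : α × β × Fin 2 ≃ (completeBipartiteGraph α β).Dart where
  toFun
    | (a, b, 0) => ⟨(.inl a, .inr b), by simp⟩
    | (a, b, 1) => ⟨(.inr b, .inl a), by simp⟩
  invFun
    | ⟨(.inl a, .inr b), _⟩ => (a, b, 0)
    | ⟨(.inr b, .inl a), _⟩ => (a, b, 1)
    | ⟨(.inl _, .inl _), h⟩ | ⟨(.inr _, .inr _), h⟩ => absurd h (by simp)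
  left_inv := by
    rintro ⟨a, b, i⟩
    fin_cases i <;> rfl
  right_inv := by
    rintro ⟨⟨_ | _, _ | _⟩, h⟩
    · simp at h
    · rfl
    · rfl
    · simp at h

theorem degree_completeBipartiteGraph_inl [Fintype β] (a : α)
    [Fintype ((completeBipartiteGraph α β).neighborSet (.inl a))] :
    (completeBipartiteGraph α β).degree (.inl a) = Fintype.card β := by
  have : (completeBipartiteGraph α β).neighborFinset (.inl a) = Finset.univ.map .inr := by
    ext (x | x) <;> simp
  rw [← SimpleGraph.card_neighborFinset_eq_degree, this, Finset.card_map, Finset.card_univ]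

theorem degree_completeBipartiteGraph_inr [Fintype α] (b : β)
    [Fintype ((completeBipartiteGraph α β).neighborSet (.inr b))] :
    (completeBipartiteGraph α β).degree (.inr b) = Fintype.card α := by
  have : (completeBipartiteGraph α β).neighborFinset (.inr b) = Finset.univ.map .inl := by
    ext (x | x) <;> simp
  rw [← SimpleGraph.card_neighborFinset_eq_degree, this, Finset.card_map, Finset.card_univ]

variable [DecidableEq α] [DecidableEq β] [DecidableRel (completeBipartiteGraph α β).Adj]
  {R : Type*} [CommRing R]

theorem edgeAdj_completeBipartiteGraph_submatrix :
    (edgeAdj R (completeBipartiteGraph α β)).submatrix bipartiteDartEquiv bipartiteDartEquiv =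
      (allOnes α R - 1) ⊗ₖ (1 ⊗ₖ !![0, 1; 0, 0]) + 1 ⊗ₖ ((allOnes β R - 1) ⊗ₖ !![0, 0; 1, 0]) := by
  ext ⟨a, b, i⟩ ⟨c, d, j⟩
  fin_cases i <;> fin_cases j <;> by_cases hac : a = c <;> by_cases hbd : b = d <;>
    simp [edgeAdj, bipartiteDartEquiv, allOnes, hac, hbd]

variable [Fintype α] [Fintype β]

theorem degDiag_completeBipartiteGraph_submatrix :
    (degDiag R (completeBipartiteGraph α β)).submatrix bipartiteDartEquiv bipartiteDartEquiv =
      1 ⊗ₖ (1 ⊗ₖ !![(Fintype.card α : R) - 1, 0; 0, (Fintype.card β : R) - 1]) := by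
  rw [degDiag, submatrix_diagonal_equiv]
  ext ⟨a, b, i⟩ ⟨c, d, j⟩
  fin_cases i <;> fin_cases j <;> by_cases hac : a = c <;>
    simp [bipartiteDartEquiv, diagonal_apply, one_apply, hac,
      degree_completeBipartiteGraph_inl, degree_completeBipartiteGraph_inr]

theorem edgeLap_completeBipartiteGraph_submatrix :
    (edgeLap R (completeBipartiteGraph α β)).submatrix bipartiteDartEquiv bipartiteDartEquiv =
      1 ⊗ₖ (1 ⊗ₖ !![(Fintype.card α : R) - 1, 1; 1, (Fintype.card β : R) - 1] +
        allOnes β R ⊗ₖ !![0, 0; -1, 0]) + allOnes α R ⊗ₖ (1 ⊗ₖ !![0, -1; 0, 0]) := by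
  rw [edgeLap, submatrix_sub, Pi.sub_apply, Pi.sub_apply, degDiag_completeBipartiteGraph_submatrix,
    edgeAdj_completeBipartiteGraph_submatrix]
  ext ⟨a, b, i⟩ ⟨c, d, j⟩
  fin_cases i <;> fin_cases j <;> simp <;> ring

theorem charpoly_edgeLap_completeBipartiteGraph_eq_charpoly_fin_two [Nonempty α] [Nonempty β]
    {p q : ℕ} (hp : Fintype.card α = p) (hq : Fintype.card β = q) :
    (edgeLap R (completeBipartiteGraph α β)).charpoly =
      (!![(p : R) - 1, 1; 1, (q : R) - 1].charpoly ^ (q - 1) *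
        !![(p : R) - 1, 1; 1 - (q : R), (q : R) - 1].charpoly) ^ (p - 1) *
      (!![(p : R) - 1, 1 - (p : R); 1, (q : R) - 1].charpoly ^ (q - 1) *
        !![(p : R) - 1, 1 - (p : R); 1 - (q : R), (q : R) - 1].charpoly) := by
  have hsplit (M₀ M₁ M₂ : Matrix (Fin 2) (Fin 2) R) :
      1 ⊗ₖ M₀ + allOnes β R ⊗ₖ M₁ + (p : R) • (1 ⊗ₖ M₂) =
        1 ⊗ₖ (M₀ + (p : R) • M₂) + allOnes β R ⊗ₖ M₁ := by
    rw [kronecker_add, kronecker_smul, add_right_comm]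
  rw [← charpoly_reindex bipartiteDartEquiv.symm, reindex_apply, Equiv.symm_symm,
    edgeLap_completeBipartiteGraph_submatrix, charpoly_one_kronecker_add_allOnes_kronecker,
    hp, hsplit]
  simp only [charpoly_one_kronecker_add_allOnes_kronecker, hq]
  simp [sub_eq_add_neg]

theorem stmt5_general [Nonempty α] [Nonempty β] {p q : ℕ}
    (hp : Fintype.card α = p) (hq : Fintype.card β = q) :
    (edgeLap R (completeBipartiteGraph α β)).charpoly =
      X * (X - C ((p : R) + q - 2)) *
        (X ^ 2 - C ((p : R) + q - 2) * X + C (((p : R) - 1) * ((q : R) - 1) - 1)) ^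
          ((p - 1) * (q - 1)) *
        (X ^ 2 - C ((p : R) + q - 2) * X + C ((p : R) * ((q : R) - 1))) ^ (p - 1) *
        (X ^ 2 - C ((p : R) + q - 2) * X + C ((q : R) * ((p : R) - 1))) ^ (q - 1) := by
  nontriviality R
  rw [charpoly_edgeLap_completeBipartiteGraph_eq_charpoly_fin_two hp hq]
  have htrace : (p : R) - 1 + (q - 1) = p + q - 2 := by ring
  have hdet : ((p : R) - 1) * (q - 1) - 1 * 1 = (p - 1) * (q - 1) - 1 := by ring
  have hdet_q : ((p : R) - 1) * (q - 1) - 1 * (1 - q) = p * (q - 1) := by ring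
  have hdet_p : ((p : R) - 1) * (q - 1) - (1 - p) * 1 = q * (p - 1) := by ring
  have hdet_pq : ((p : R) - 1) * (q - 1) - (1 - p) * (1 - q) = 0 := by ring
  simp only [charpoly_fin_two, trace_fin_two_of, det_fin_two_of, htrace, hdet, hdet_q, hdet_p,
    hdet_pq, map_zero]
  rw [mul_pow, ← pow_mul]
  ring

end CompleteBipartite

/-- The characteristic polynomial of the edge Laplacian of the complete bipartite graph
`K_{p,q}`, encoding its spectrum. -/
theorem stmt5 (p q : ℕ) (hp : 1 ≤ p) (hq : 1 ≤ q) :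
    (edgeLap ℚ (completeBipartiteGraph (Fin p) (Fin q))).charpoly =
      X * (X - C ((p : ℚ) + q - 2)) *
        (X ^ 2 - C ((p : ℚ) + q - 2) * X + C (((p : ℚ) - 1) * ((q : ℚ) - 1) - 1)) ^
          ((p - 1) * (q - 1)) *
        (X ^ 2 - C ((p : ℚ) + q - 2) * X + C ((p : ℚ) * ((q : ℚ) - 1))) ^ (p - 1) *
        (X ^ 2 - C ((p : ℚ) + q - 2) * X + C ((q : ℚ) * ((p : ℚ) - 1))) ^ (q - 1) := by
  have : Nonempty (Fin p) := Fin.pos_iff_nonempty.mp hp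
  have : Nonempty (Fin q) := Fin.pos_iff_nonempty.mp hq
  exact stmt5_general (Fintype.card_fin p) (Fintype.card_fin q)
end

section
/- Let X be a finite simple graph with edge adjacency matrix M = M(X). Then for all darts d, e of X, M_{d,e} + M_{d,σ(e)} + M_{σ(d),e} + M_{σ(d),σ(e)} equals 1 if the underlying edges of d and e are distinct and share a vertex, and equals 0 otherwise. In other words, the sum of the four blocks of M equals the adjacency matrix of the line graph of X. -/
open Matrix

variable {V : Type*} [Fintype V] [DecidableEq V]

/-!
Reversing `d` and `e` runs through the four ways an endpoint of one edge can coincide with an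
endpoint of the other. If the edges agree, each such coincidence forces backtracking and all four
entries vanish. If they differ, backtracking is impossible, so the entries count the coincidences,
and there is at most one because two distinct common endpoints would determine the edge.
-/

section DartEdges

variable {W : Type*} {G : SimpleGraph W} {d e : G.Dart}

lemma dart_edge_eq_of_fst_mem_of_snd_mem (hfst : d.fst ∈ e.edge) (hsnd : d.snd ∈ e.edge) :
    d.edge = e.edge :=
  ((Sym2.mem_and_mem_iff d.fst_ne_snd).mp ⟨hfst, hsnd⟩).symm

lemma lineGraph_adj_dart_edge_iff :
    G.lineGraph.Adj ⟨d.edge, d.edge_mem⟩ ⟨e.edge, e.edge_mem⟩ ↔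
      d.edge ≠ e.edge ∧ (d.snd ∈ e.edge ∨ d.fst ∈ e.edge) := by
  rw [SimpleGraph.lineGraph_adj_iff_exists, Ne, Subtype.mk.injEq]
  simp only [SimpleGraph.Dart.edge, Sym2.mem_iff, or_and_right, exists_or, exists_eq_left]
  rw [or_comm]

end DartEdges

section EdgeAdj

variable {W R : Type*} [DecidableEq W] [Ring R]
  {G : SimpleGraph W} [DecidableRel G.Adj] {d e : G.Dart}

lemma edgeAdj_eq_zero_of_edge_eq (h : d.edge = e.edge) : edgeAdj R G d e = 0 := by
  rcases (SimpleGraph.dart_edge_eq_iff d e).mp h with rfl | rfl <;> simp [edgeAdj]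

lemma edgeAdj_of_edge_ne (h : d.edge ≠ e.edge) :
    edgeAdj R G d e = if d.snd = e.fst then 1 else 0 := by
  have fst_ne_snd_of_snd_eq_fst (hhead : d.snd = e.fst) : d.fst ≠ e.snd := fun htail =>
    h (SimpleGraph.dart_edge_eq_mk'_iff'.mpr (.inr ⟨htail, hhead⟩))
  exact if_congr (and_iff_left_of_imp fst_ne_snd_of_snd_eq_fst) rfl rfl

lemma edgeAdj_add_edgeAdj_symm_of_edge_ne (h : d.edge ≠ e.edge) :
    edgeAdj R G d e + edgeAdj R G d e.symm = if d.snd ∈ e.edge then 1 else 0 := by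
  have hsymm : d.edge ≠ e.symm.edge := by rwa [e.edge_symm]
  rw [edgeAdj_of_edge_ne h, edgeAdj_of_edge_ne hsymm]
  by_cases hfst : d.snd = e.fst <;> simp [hfst, SimpleGraph.Dart.edge]

theorem sum_edgeAdj_symm_eq_lineGraph_adjMatrix [DecidableRel G.lineGraph.Adj] (d e : G.Dart) :
    edgeAdj R G d e + edgeAdj R G d e.symm + edgeAdj R G d.symm e + edgeAdj R G d.symm e.symm =
      G.lineGraph.adjMatrix R ⟨d.edge, d.edge_mem⟩ ⟨e.edge, e.edge_mem⟩ := by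
  simp only [SimpleGraph.adjMatrix_apply, lineGraph_adj_dart_edge_iff]
  by_cases hedge : d.edge = e.edge
  · simp [edgeAdj_eq_zero_of_edge_eq, hedge]
  · have hsymm : d.symm.edge ≠ e.edge := by rwa [d.edge_symm]
    have not_both : d.snd ∈ e.edge → d.fst ∉ e.edge := fun hsnd hfst =>
      hedge (dart_edge_eq_of_fst_mem_of_snd_mem hfst hsnd)
    rw [add_assoc, edgeAdj_add_edgeAdj_symm_of_edge_ne hedge,
      edgeAdj_add_edgeAdj_symm_of_edge_ne hsymm]
    by_cases hsnd : d.snd ∈ e.edge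
    · simp [hedge, hsnd, not_both hsnd]
    · simp [hedge, hsnd]

end EdgeAdj

theorem stmt12_general {W : Type*} [DecidableEq W] (R : Type*) [Ring R]
    (G : SimpleGraph W) [DecidableRel G.Adj] (d e : G.Dart) :
    edgeAdj R G d e + edgeAdj R G d e.symm + edgeAdj R G d.symm e + edgeAdj R G d.symm e.symm =
      if d.edge ≠ e.edge ∧
          (d.toProd.2 = e.toProd.1 ∨ d.toProd.2 = e.toProd.2 ∨
            d.toProd.1 = e.toProd.1 ∨ d.toProd.1 = e.toProd.2)
        then 1 else 0 := by
  classical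
  rw [sum_edgeAdj_symm_eq_lineGraph_adjMatrix, SimpleGraph.adjMatrix_apply]
  refine if_congr (lineGraph_adj_dart_edge_iff.trans (and_congr_right fun _ => ?_)) rfl rfl
  rw [SimpleGraph.Dart.edge, Sym2.mem_iff, Sym2.mem_iff, or_assoc]

/-- The sum of the four blocks of the edge adjacency matrix is the adjacency matrix of the
line graph: for darts `d, e`, the sum `M_{d,e} + M_{d,σe} + M_{σd,e} + M_{σd,σe}` is `1`
precisely when the underlying edges of `d` and `e` are distinct and share a vertex,
and `0` otherwise. -/
theorem stmt12 (G : SimpleGraph V) [DecidableRel G.Adj] :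
    ∀ d e : G.Dart,
      edgeAdj ℚ G d e + edgeAdj ℚ G d e.symm + edgeAdj ℚ G d.symm e +
          edgeAdj ℚ G d.symm e.symm =
        if d.edge ≠ e.edge ∧
            (d.toProd.2 = e.toProd.1 ∨ d.toProd.2 = e.toProd.2 ∨
              d.toProd.1 = e.toProd.1 ∨ d.toProd.1 = e.toProd.2)
          then 1 else 0 :=
  stmt12_general ℚ G
end
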